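/- (Claim 4: strong converse for the three-receiver BC, proving Theorem 6.) For every rate triple (R₁, R₂, R₃) ∈ [0,∞)³, all positive constants λ₁^{(k)}, λ₂^{(k)} (k = 1,2,3) satisfying Σ_{k=1}^3 (λ₁^{(k)} + λ₂^{(k)}) < 1, and every ε > 0, there exists η₀ ∈ ℕ such that for every blocklength n ≥ η₀ and all finite sets ℳ_k with |ℳ_k| = ⌈exp(exp(n R_k))⌉ (k = 1,2,3), a necessary condition for an (n, {ℳ_k, λ₁^{(k)}, λ₂^{(k)}}_{k∈{1,2,3}}) average-error ID code for the three-receiver BC W(y₁,y₂,y₃|x) to exist is that for some PMF P on 𝒳, R_k < I(P, W_k) + ε for all k ∈ {1,2,3}. -/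

import Mathlib

open scoped Classical
open Finset

noncomputable section

/-- `P` is a probability mass function on the finite type `X`. -/
def IsPMF {X : Type*} [Fintype X] (P : X → ℝ) : Prop :=
  (∀ x, 0 ≤ P x) ∧ ∑ x, P x = 1

/-- `W` is a (discrete memoryless) channel from `X` to `Y`. -/
def IsChannel {X Y : Type*} [Fintype Y] (W : X → Y → ℝ) : Prop :=
  (∀ x y, 0 ≤ W x y) ∧ ∀ x, ∑ y, W x y = 1

/-- The `n`-fold memoryless extension `W^n(𝐲|𝐱) = ∏ᵢ W(yᵢ|xᵢ)`. -/
def Wn {X Y : Type*} (W : X → Y → ℝ) (n : ℕ) (x : Fin n → X) (y : Fin n → Y) : ℝ :=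
  ∏ i, W (x i) (y i)

/-- Mutual information `I(P,W)` (natural logarithm), with the convention that
terms with `P x * W x y = 0` contribute `0`. -/
def mutInf {X Y : Type*} [Fintype X] [Fintype Y] (P : X → ℝ) (W : X → Y → ℝ) : ℝ :=
  ∑ x, ∑ y, if P x * W x y = 0 then 0
    else P x * W x y * Real.log (W x y / ∑ x', P x' * W x' y)

/-- The error requirements of an `(n, M, l1, l2)` ID code for the DMC `W`:
maximum probability of missed identification at most `l1`, maximum probability
of wrong identification at most `l2`. -/
def IDCodeErr {X Y M : Type*} [Fintype X] [Fintype Y]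
    (n : ℕ) (W : X → Y → ℝ) (Q : M → (Fin n → X) → ℝ)
    (D : M → Finset (Fin n → Y)) (l1 l2 : ℝ) : Prop :=
  (∀ m, ∑ x, Q m x * ∑ y ∈ (D m)ᶜ, Wn W n x y ≤ l1) ∧
  (∀ m m', m ≠ m' → ∑ x, Q m x * ∑ y ∈ D m', Wn W n x y ≤ l2)

/-- `(n, M, l1, l2)` ID code for the DMC `W`. -/
def IsIDCode {X Y M : Type*} [Fintype X] [Fintype Y]
    (n : ℕ) (W : X → Y → ℝ) (Q : M → (Fin n → X) → ℝ)
    (D : M → Finset (Fin n → Y)) (l1 l2 : ℝ) : Prop :=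
  (∀ m, IsPMF (Q m)) ∧ IDCodeErr n W Q D l1 l2

/-- `W` is a three-receiver broadcast channel from `X` to `Y1 × Y2 × Y3`. -/
def IsBC3 {X Y1 Y2 Y3 : Type*} [Fintype Y1] [Fintype Y2] [Fintype Y3]
    (W : X → Y1 → Y2 → Y3 → ℝ) : Prop :=
  (∀ x y1 y2 y3, 0 ≤ W x y1 y2 y3) ∧ ∀ x, ∑ y1, ∑ y2, ∑ y3, W x y1 y2 y3 = 1

/-- Marginal channel to receiver 1. -/
def marg1 {X Y1 Y2 Y3 : Type*} [Fintype Y2] [Fintype Y3]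
    (W : X → Y1 → Y2 → Y3 → ℝ) : X → Y1 → ℝ :=
  fun x y1 => ∑ y2, ∑ y3, W x y1 y2 y3

/-- Marginal channel to receiver 2. -/
def marg2 {X Y1 Y2 Y3 : Type*} [Fintype Y1] [Fintype Y3]
    (W : X → Y1 → Y2 → Y3 → ℝ) : X → Y2 → ℝ :=
  fun x y2 => ∑ y1, ∑ y3, W x y1 y2 y3

/-- Marginal channel to receiver 3. -/
def marg3 {X Y1 Y2 Y3 : Type*} [Fintype Y1] [Fintype Y2]
    (W : X → Y1 → Y2 → Y3 → ℝ) : X → Y3 → ℝ :=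
  fun x y3 => ∑ y1, ∑ y2, W x y1 y2 y3

/-- Average-error ID code for the three-receiver BC: every `Q m1 m2 m3` is a
PMF on `Xⁿ`, and for each receiver `k` the mixtures (averaging uniformly over
the other two messages) form an ID code for the marginal channel `W_k`. -/
def IsBC3IDCode {X Y1 Y2 Y3 : Type*}
    [Fintype X] [Fintype Y1] [Fintype Y2] [Fintype Y3]
    (n k1 k2 k3 : ℕ) (W : X → Y1 → Y2 → Y3 → ℝ)
    (Q : Fin k1 → Fin k2 → Fin k3 → (Fin n → X) → ℝ)
    (D1 : Fin k1 → Finset (Fin n → Y1))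
    (D2 : Fin k2 → Finset (Fin n → Y2))
    (D3 : Fin k3 → Finset (Fin n → Y3))
    (l11 l21 l12 l22 l13 l23 : ℝ) : Prop :=
  (∀ m1 m2 m3, IsPMF (Q m1 m2 m3)) ∧
  IDCodeErr n (marg1 W)
    (fun m1 x => ((k2 * k3 : ℕ) : ℝ)⁻¹ * ∑ m2, ∑ m3, Q m1 m2 m3 x) D1 l11 l21 ∧
  IDCodeErr n (marg2 W)
    (fun m2 x => ((k1 * k3 : ℕ) : ℝ)⁻¹ * ∑ m1, ∑ m3, Q m1 m2 m3 x) D2 l12 l22 ∧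
  IDCodeErr n (marg3 W)
    (fun m3 x => ((k1 * k2 : ℕ) : ℝ)⁻¹ * ∑ m1, ∑ m2, Q m1 m2 m3 x) D3 l13 l23

/-!
Fix one receiver with channel `W`. Let `x` be a sequence whose type has mutual information below
`R`. By Chebyshev's inequality its information density relative to its own type is rarely much
above the mean, and there are only polynomially many types; so soft covering with Maurey's
empirical method shows that every input distribution supported on such sequences is imitated at the
output of `Wⁿ` by the uniform distribution on a tuple of about `exp(nR')` of them, with `R' < R`.

If a message of an ID code with errors `λ₁`, `λ₂` puts mass greater than `λ₁ + λ₂` on these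
sequences, its conditional distribution is imitated by such a tuple, and no two messages can share
one, since their decoding sets must still tell them apart. Hence there are at most
`(|X|ⁿ) ^ exp(nR')` such messages, a negligible fraction of `exp(exp(nR))`, and averaged over all
messages the mass of the low-information sequences is at most `λ₁ + λ₂ + o(1)`.

For the broadcast channel the three averages are one and the same distribution on `Xⁿ`. Since the
six errors sum to less than `1`, some sequence is not of low information for any of the three
receivers, and its type is the required `P`.
-/

section PMF

variable {ι κ X Y M N : Type*}

lemma IsChannel.isPMF [Fintype Y] {W : X → Y → ℝ} (hW : IsChannel W) (x : X) : IsPMF (W x) :=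
  ⟨hW.1 x, hW.2 x⟩

section

variable [Fintype ι] {q : ι → ℝ}

lemma IsPMF.sum_le_one (hq : IsPMF q) (s : Finset ι) : ∑ x ∈ s, q x ≤ 1 :=
  (sum_le_univ_sum_of_nonneg hq.1).trans_eq hq.2

lemma IsPMF.sum_compl [DecidableEq ι] (hq : IsPMF q) (s : Finset ι) :
    ∑ x ∈ sᶜ, q x = 1 - ∑ x ∈ s, q x :=
  eq_sub_of_add_eq (by rw [sum_compl_add_sum, hq.2])

lemma IsPMF.exists_le {F : ι → ℝ} {c : ℝ} (hq : IsPMF q) (h : ∑ x, q x * F x ≤ c) :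
    ∃ x, F x ≤ c := by
  by_contra! hF
  obtain ⟨x, -, hx⟩ := exists_ne_zero_of_sum_ne_zero (hq.2.trans_ne one_ne_zero)
  have hlt : ∑ x, q x * c < ∑ x, q x * F x :=
    sum_lt_sum (fun x _ => mul_le_mul_of_nonneg_left (hF x).le (hq.1 x))
      ⟨x, mem_univ x, mul_lt_mul_of_pos_left (hF x) ((hq.1 x).lt_of_ne' hx)⟩
  rw [← sum_mul, hq.2, one_mul] at hlt
  exact hlt.not_ge h

lemma IsPMF.exists_forall_notMem [Fintype κ] (hq : IsPMF q) (s : κ → Finset ι)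
    (h : ∑ i, ∑ x ∈ s i, q x < 1) : ∃ x, ∀ i, x ∉ s i := by
  by_contra! hcover
  have hle : ∑ x, q x ≤ ∑ x, ∑ i, if x ∈ s i then q x else 0 := sum_le_sum fun x _ => by
    obtain ⟨i, hi⟩ := hcover x
    calc q x = if x ∈ s i then q x else 0 := (if_pos hi).symm
      _ ≤ ∑ i, if x ∈ s i then q x else 0 :=
        single_le_sum (f := fun i => if x ∈ s i then q x else 0)
          (fun i _ => by split_ifs; exacts [hq.1 x, le_rfl]) (mem_univ i)
  rw [hq.2, sum_comm] at hle
  simp only [sum_ite_mem, univ_inter] at hle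
  exact hle.not_gt h

end

lemma IsPMF.pi [Fintype ι] [DecidableEq ι] {Y : ι → Type*} [∀ i, Fintype (Y i)]
    {w : ∀ i, Y i → ℝ} (hw : ∀ i, IsPMF (w i)) : IsPMF fun y : ∀ i, Y i => ∏ i, w i (y i) := by
  refine ⟨fun y => prod_nonneg fun i _ => (hw i).1 _, ?_⟩
  rw [← Fintype.piFinset_univ, ← prod_univ_sum]
  exact prod_eq_one fun i _ => (hw i).2

/-- The PMF `q` conditioned on the event `B`. If `B` has probability `0`, this is the zero
function. -/
def condPMF (q : ι → ℝ) (B : Finset ι) (x : ι) : ℝ :=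
  if x ∈ B then q x / ∑ z ∈ B, q z else 0

lemma isPMF_condPMF [Fintype ι] {q : ι → ℝ} (hq : ∀ x, 0 ≤ q x) {B : Finset ι}
    (hB : 0 < ∑ x ∈ B, q x) : IsPMF (condPMF q B) := by
  refine ⟨fun x => ?_, ?_⟩
  · unfold condPMF
    split_ifs
    exacts [div_nonneg (hq x) hB.le, le_rfl]
  · simp only [condPMF, sum_ite_mem, univ_inter, ← sum_div]
    exact div_self hB.ne'

lemma condPMF_le_div {q : ι → ℝ} (hq : ∀ x, 0 ≤ q x) {B : Finset ι} {b : ℝ} (hb : 0 < b)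
    (hB : b ≤ ∑ x ∈ B, q x) (x : ι) : condPMF q B x ≤ q x / b := by
  unfold condPMF
  split_ifs
  exacts [div_le_div_of_nonneg_left (hq x) hb hB, div_nonneg (hq x) hb.le]

/-- The uniform mixture of a finite family of PMFs. -/
def uniformMix [Fintype M] (Q : M → ι → ℝ) (x : ι) : ℝ :=
  (Fintype.card M : ℝ)⁻¹ * ∑ m, Q m x

lemma isPMF_uniformMix [Fintype ι] [Fintype M] [Nonempty M] {Q : M → ι → ℝ}
    (hQ : ∀ m, IsPMF (Q m)) : IsPMF (uniformMix Q) := by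
  refine ⟨fun x => mul_nonneg (by positivity) (sum_nonneg fun m _ => (hQ m).1 x), ?_⟩
  simp only [uniformMix, ← mul_sum]
  rw [sum_comm]
  simp [(hQ _).2]

lemma uniformMix_comm [Fintype M] [Fintype N] (Q : M → N → ι → ℝ) :
    uniformMix (fun m => uniformMix fun n => Q m n) =
      uniformMix fun n => uniformMix fun m => Q m n := by
  ext x
  simp only [uniformMix, ← mul_sum]
  rw [sum_comm, mul_left_comm]

lemma uniformMix_uniformMix_fin {a b : ℕ} (q : Fin a → Fin b → ι → ℝ) :
    uniformMix (fun i => uniformMix (q i)) =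
      fun x => ((a * b : ℕ) : ℝ)⁻¹ * ∑ i, ∑ j, q i j x := by
  ext x
  simp only [uniformMix, ← mul_sum, Fintype.card_fin, Nat.cast_mul, mul_inv, mul_assoc]

lemma sum_uniformMix_le [Fintype ι] [Fintype M] {Q : M → ι → ℝ} (hQ : ∀ m, IsPMF (Q m))
    (B : Finset ι) {b : ℝ} (hb : 0 ≤ b) :
    ∑ x ∈ B, uniformMix Q x ≤
      b + #{m | b ≤ ∑ x ∈ B, Q m x} / (Fintype.card M : ℝ) := by
  have hm : ∀ m, ∑ x ∈ B, Q m x ≤ b + if b ≤ ∑ x ∈ B, Q m x then 1 else 0 := fun m => by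
    split_ifs with h
    · linarith [(hQ m).sum_le_one B]
    · linarith
  calc ∑ x ∈ B, uniformMix Q x = (Fintype.card M : ℝ)⁻¹ * ∑ m, ∑ x ∈ B, Q m x := by
        simp only [uniformMix, ← mul_sum]
        rw [sum_comm]
    _ ≤ (Fintype.card M : ℝ)⁻¹ * ∑ m, (b + if b ≤ ∑ x ∈ B, Q m x then 1 else 0) := by
        gcongr with m
        exact hm m
    _ = (Fintype.card M : ℝ)⁻¹ * Fintype.card M * b +
          #{m | b ≤ ∑ x ∈ B, Q m x} / (Fintype.card M : ℝ) := by
        simp only [sum_add_distrib, sum_const, card_univ, nsmul_eq_mul, sum_boole]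
        ring
    _ ≤ b + #{m | b ≤ ∑ x ∈ B, Q m x} / (Fintype.card M : ℝ) := by
        gcongr
        exact mul_le_of_le_one_left hb inv_mul_le_one

end PMF

section Moments

variable {Y : Type*} [Fintype Y] {n : ℕ} {w : Fin n → Y → ℝ}

lemma sum_pi_mul_sq_sum_of_mean_eq_zero {h : Fin n → Y → ℝ} (hw : ∀ i, IsPMF (w i))
    (hh : ∀ i, ∑ z, w i z * h i z = 0) :
    ∑ y : Fin n → Y, (∏ i, w i (y i)) * (∑ i, h i (y i)) ^ 2 =
      ∑ i, ∑ z, w i z * h i z ^ 2 := by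
  induction n with
  | zero => simp
  | succ n ih =>
    set p : (Fin n → Y) → ℝ := fun y => ∏ i, w i.succ (y i)
    set S : (Fin n → Y) → ℝ := fun y => ∑ i, h i.succ (y i)
    have hp : ∑ y, p y = 1 := (IsPMF.pi fun i => hw (Fin.succ i)).2
    have expand : ∀ z y, w 0 z * p y * (h 0 z + S y) ^ 2 = w 0 z * h 0 z ^ 2 * p y +
        2 * (w 0 z * h 0 z) * (p y * S y) + w 0 z * (p y * S y ^ 2) := fun z y => by ring
    rw [← (Fin.consEquiv fun _ => Y).sum_comp, Fintype.sum_prod_type, Fin.sum_univ_succ]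
    simp only [Fin.consEquiv_apply, Fin.prod_univ_succ, Fin.sum_univ_succ, Fin.cons_zero,
      Fin.cons_succ]
    change ∑ z, ∑ y, w 0 z * p y * (h 0 z + S y) ^ 2 = _
    simp only [expand, sum_add_distrib, ← mul_sum, ← sum_mul, hp, hh 0, (hw 0).2]
    rw [ih (fun i => hw i.succ) fun i => hh i.succ]
    ring

lemma sum_pi_mul_sq_sum_sub_mean_le (hw : ∀ i, IsPMF (w i)) (g : Fin n → Y → ℝ) :
    ∑ y : Fin n → Y, (∏ i, w i (y i)) * (∑ i, (g i (y i) - ∑ z, w i z * g i z)) ^ 2 ≤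
      ∑ i, ∑ z, w i z * g i z ^ 2 := by
  have hmean : ∀ i, ∑ z, w i z * (g i z - ∑ z', w i z' * g i z') = 0 := fun i => by
    simp only [mul_sub, sum_sub_distrib, ← sum_mul, (hw i).2, one_mul, sub_self]
  rw [sum_pi_mul_sq_sum_of_mean_eq_zero hw (h := fun i y => g i y - ∑ z, w i z * g i z) hmean]
  refine sum_le_sum fun i _ => ?_
  set μ := ∑ z, w i z * g i z with hμ
  have hvar : ∑ z, w i z * (g i z - μ) ^ 2 = ∑ z, w i z * g i z ^ 2 - μ ^ 2 := by
    have expand : ∀ z, w i z * (g i z - μ) ^ 2 =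
        w i z * g i z ^ 2 - 2 * μ * (w i z * g i z) + w i z * μ ^ 2 := fun z => by ring
    simp only [expand, sum_add_distrib, sum_sub_distrib, ← mul_sum, ← sum_mul, (hw i).2, ← hμ]
    ring
  linarith [sq_nonneg μ]

lemma sum_pi_filter_lt_sum_sub_mean_le (hw : ∀ i, IsPMF (w i)) (g : Fin n → Y → ℝ) {t : ℝ}
    (ht : 0 < t) :
    ∑ y : Fin n → Y with t < ∑ i, (g i (y i) - ∑ z, w i z * g i z), ∏ i, w i (y i) ≤
      (∑ i, ∑ z, w i z * g i z ^ 2) / t ^ 2 := by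
  have hp : ∀ y : Fin n → Y, 0 ≤ ∏ i, w i (y i) := (IsPMF.pi hw).1
  rw [le_div_iff₀ (by positivity), sum_mul]
  refine le_trans ?_ (sum_pi_mul_sq_sum_sub_mean_le hw g)
  refine (sum_le_sum fun y hy => ?_).trans
    (sum_le_univ_sum_of_nonneg fun y => mul_nonneg (hp y) (sq_nonneg _))
  have hlt := (mem_filter.1 hy).2
  have := hp y
  gcongr

end Moments

section OutputDistribution

variable {X Y : Type*} [Fintype X]

/-- The output distribution `P W` of the channel `W` with input distribution `P`. -/
def outDist (P : X → ℝ) (W : X → Y → ℝ) (y : Y) : ℝ :=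
  ∑ x, P x * W x y

lemma sum_outDist (P : X → ℝ) (W : X → Y → ℝ) (D : Finset Y) :
    ∑ y ∈ D, outDist P W y = ∑ x, P x * ∑ y ∈ D, W x y := by
  simp only [outDist, mul_sum]
  exact sum_comm

lemma outDist_nonneg {P : X → ℝ} {W : X → Y → ℝ} (hP : ∀ x, 0 ≤ P x) (hW : ∀ x y, 0 ≤ W x y)
    (y : Y) : 0 ≤ outDist P W y :=
  sum_nonneg fun x _ => mul_nonneg (hP x) (hW x y)

lemma isPMF_outDist [Fintype Y] {P : X → ℝ} {W : X → Y → ℝ} (hP : IsPMF P) (hW : IsChannel W) :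
    IsPMF (outDist P W) := by
  refine ⟨outDist_nonneg hP.1 hW.1, ?_⟩
  rw [sum_outDist]
  simp only [hW.2, mul_one, hP.2]

lemma outDist_condPMF_le {q : X → ℝ} {W : X → Y → ℝ} (hq : ∀ x, 0 ≤ q x) (hW : ∀ x y, 0 ≤ W x y)
    {B : Finset X} {b : ℝ} (hb : 0 < b) (hB : b ≤ ∑ x ∈ B, q x) (y : Y) :
    outDist (condPMF q B) W y ≤ outDist q W y / b := by
  rw [outDist, outDist, sum_div]
  refine sum_le_sum fun x _ => ?_
  rw [mul_div_right_comm]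
  exact mul_le_mul_of_nonneg_right (condPMF_le_div hq hb hB x) (hW x y)

end OutputDistribution

section Empirical

variable {X Y : Type*} {n : ℕ}

/-- The empirical distribution (type) of a tuple. It is the zero function when `n = 0`. -/
def empirical (x : Fin n → X) (a : X) : ℝ :=
  (n : ℝ)⁻¹ * #{i | x i = a}

lemma sum_empirical_mul [Fintype X] (x : Fin n → X) (h : X → ℝ) :
    ∑ a, empirical x a * h a = (n : ℝ)⁻¹ * ∑ i, h (x i) := by
  simp only [empirical, mul_assoc, ← mul_sum]
  congr 1
  rw [← sum_fiberwise univ x]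
  refine sum_congr rfl fun a _ => ?_
  rw [← nsmul_eq_mul, ← sum_const]
  exact sum_congr rfl fun i hi => by rw [(mem_filter.1 hi).2]

lemma empirical_nonneg (x : Fin n → X) (a : X) : 0 ≤ empirical x a := by
  unfold empirical
  positivity

lemma isPMF_empirical [Fintype X] (hn : 0 < n) (x : Fin n → X) : IsPMF (empirical x) := by
  refine ⟨empirical_nonneg x, ?_⟩
  simpa [hn.ne'] using sum_empirical_mul x fun _ => 1

lemma outDist_empirical [Fintype X] (x : Fin n → X) (W : X → Y → ℝ) (y : Y) :
    outDist (empirical x) W y = (n : ℝ)⁻¹ * ∑ i, W (x i) y :=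
  sum_empirical_mul x fun a => W a y

end Empirical

section Resolvability

variable {X Y : Type*}

/-- `P` exceeds `P'` by at most `δ` on every event. For PMFs this says that their total variation
distance is at most `δ`, but the one-sided form also makes sense for subprobabilities. -/
def AlmostLE (P P' : Y → ℝ) (δ : ℝ) : Prop :=
  ∀ D : Finset Y, ∑ y ∈ D, P y ≤ ∑ y ∈ D, P' y + δ

lemma AlmostLE.symm [Fintype Y] {P P' : Y → ℝ} {δ : ℝ} (h : AlmostLE P P' δ) (hP : IsPMF P)
    (hP' : IsPMF P') : AlmostLE P' P δ := fun D => by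
  have hD := h Dᶜ
  rw [hP.sum_compl, hP'.sum_compl] at hD
  linarith

lemma almostLE_truncate [Fintype Y] {w v : Y → ℝ} (hw : ∀ y, 0 ≤ w y) {δ : ℝ}
    (h : ∑ y with v y < w y, w y ≤ δ) : AlmostLE w (fun y => if v y < w y then 0 else w y) δ := by
  intro D
  have hsplit : ∀ y, w y = (if v y < w y then 0 else w y) + if v y < w y then w y else 0 :=
    fun y => by split_ifs <;> simp
  calc ∑ y ∈ D, w y = ∑ y ∈ D, (if v y < w y then 0 else w y) +
        ∑ y ∈ D, if v y < w y then w y else 0 := by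
        rw [← sum_add_distrib, sum_congr rfl fun y _ => hsplit y]
    _ ≤ ∑ y ∈ D, (if v y < w y then 0 else w y) + δ := by
        gcongr
        refine le_trans (sum_le_univ_sum_of_nonneg fun y => ?_) (by rwa [← sum_filter])
        split_ifs
        exacts [hw y, le_rfl]

variable [Fintype X]

lemma almostLE_outDist {q : X → ℝ} (hq : IsPMF q) {W f : X → Y → ℝ} {δ : ℝ}
    (h : ∀ x, q x ≠ 0 → AlmostLE (W x) (f x) δ) : AlmostLE (outDist q W) (outDist q f) δ := by
  intro D
  have hrow : ∀ x, q x * ∑ y ∈ D, W x y ≤ q x * ∑ y ∈ D, f x y + q x * δ := fun x => by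
    by_cases hx : q x = 0
    · simp [hx]
    · rw [← mul_add]
      exact mul_le_mul_of_nonneg_left (h x hx D) (hq.1 x)
  calc ∑ y ∈ D, outDist q W y ≤ ∑ x, (q x * ∑ y ∈ D, f x y + q x * δ) := by
        rw [sum_outDist]
        exact sum_le_sum fun x _ => hrow x
    _ = ∑ y ∈ D, outDist q f y + δ := by
        rw [sum_add_distrib, ← sum_mul, hq.2, one_mul, sum_outDist]

/-- The output distribution of `W` under the input distribution `q` is approximated, up to `δ`, by
the output distribution under a `K`-type (channel resolvability). -/
def IsResolvable (W : X → Y → ℝ) (K : ℕ) (δ : ℝ) (q : X → ℝ) : Prop :=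
  ∃ u : Fin K → X, AlmostLE (outDist q W) (outDist (empirical u) W) δ

variable [Fintype Y]

-- Maurey's empirical method: a random tuple with i.i.d. entries of law `q` attains the bound on
-- average.
lemma exists_tuple_sum_sq_outDist_sub_le {q : X → ℝ} (hq : IsPMF q) (f : X → Y → ℝ) {v : Y → ℝ}
    (hv : ∀ y, 0 ≤ v y) {K : ℕ} (hK : 0 < K) :
    ∃ u : Fin K → X, ∑ y, v y * (outDist (empirical u) f y - outDist q f y) ^ 2 ≤
      (∑ x, q x * ∑ y, v y * f x y ^ 2) / K := by
  have hK' : (0 : ℝ) < K := by exact_mod_cast hK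
  have hdev : ∀ (u : Fin K → X) y, outDist (empirical u) f y - outDist q f y =
      (K : ℝ)⁻¹ * ∑ i, (f (u i) y - ∑ x, q x * f x y) := fun u y => by
    rw [outDist_empirical, sum_sub_distrib, mul_sub]
    simp [outDist, hK'.ne']
  refine (IsPMF.pi fun _ => hq).exists_le ?_
  calc ∑ u : Fin K → X, (∏ i, q (u i)) *
        ∑ y, v y * (outDist (empirical u) f y - outDist q f y) ^ 2
      = ∑ y, v y * (((K : ℝ)⁻¹) ^ 2 *
          ∑ u : Fin K → X, (∏ i, q (u i)) * (∑ i, (f (u i) y - ∑ x, q x * f x y)) ^ 2) := by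
        simp only [hdev, mul_sum]
        rw [sum_comm]
        refine sum_congr rfl fun y _ => sum_congr rfl fun u _ => ?_
        simp only [← mul_sum]
        ring
    _ ≤ ∑ y, v y * (((K : ℝ)⁻¹) ^ 2 * ∑ _i : Fin K, ∑ x, q x * f x y ^ 2) := by
        gcongr with y
        · exact hv y
        · exact sum_pi_mul_sq_sum_sub_mean_le (fun _ => hq) fun _ x => f x y
    _ = (∑ x, q x * ∑ y, v y * f x y ^ 2) / K := by
        simp only [sum_const, card_univ, Fintype.card_fin, nsmul_eq_mul, mul_sum, sum_div]
        rw [sum_comm]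
        refine sum_congr rfl fun x _ => sum_congr rfl fun y _ => ?_
        field_simp

lemma sq_sum_le_sum_mul_sum_inv_mul_sq {V r : Y → ℝ} (hV : ∀ y, 0 ≤ V y)
    (hr : ∀ y, V y = 0 → r y = 0) (D : Finset Y) :
    (∑ y ∈ D, r y) ^ 2 ≤ (∑ y, V y) * ∑ y, (V y)⁻¹ * r y ^ 2 := by
  have hVr : ∀ y, 0 ≤ (V y)⁻¹ * r y ^ 2 := fun y => mul_nonneg (inv_nonneg.2 (hV y)) (sq_nonneg _)
  calc (∑ y ∈ D, r y) ^ 2 ≤ (∑ y ∈ D, V y) * ∑ y ∈ D, (V y)⁻¹ * r y ^ 2 := by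
        refine sum_sq_le_sum_mul_sum_of_sq_le_mul D (fun y _ => hV y) (fun y _ => hVr y)
          fun y _ => le_of_eq ?_
        by_cases h : V y = 0
        · simp [h, hr y h]
        · field_simp
    _ ≤ (∑ y, V y) * ∑ y, (V y)⁻¹ * r y ^ 2 :=
        mul_le_mul (sum_le_univ_sum_of_nonneg hV) (sum_le_univ_sum_of_nonneg hVr)
          (sum_nonneg fun y _ => hVr y) (sum_nonneg fun y _ => hV y)

lemma sum_inv_mul_sq_le {f V : Y → ℝ} {T : ℝ} (hf : ∀ y, 0 ≤ f y) (hf1 : ∑ y, f y ≤ 1)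
    (hV : ∀ y, 0 ≤ V y) (hT : 0 ≤ T) (hfV : ∀ y, f y ≤ T * V y) :
    ∑ y, (V y)⁻¹ * f y ^ 2 ≤ T := by
  calc ∑ y, (V y)⁻¹ * f y ^ 2 ≤ ∑ y, T * f y := by
        refine sum_le_sum fun y _ => ?_
        rcases (hV y).eq_or_lt with h | h
        · simpa [← h] using mul_nonneg hT (hf y)
        · rw [inv_mul_le_iff₀ h, sq, ← mul_assoc, mul_comm (V y)]
          exact mul_le_mul_of_nonneg_right (hfV y) (hf y)
    _ ≤ T := by
        rw [← mul_sum]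
        exact mul_le_of_le_one_right hT hf1

variable {q : X → ℝ} {V : Y → ℝ} {T δ : ℝ} {K : ℕ}

lemma isResolvable_of_le_mul (hq : IsPMF q) {f : X → Y → ℝ} (hf : ∀ x y, 0 ≤ f x y)
    (hf1 : ∀ x, ∑ y, f x y ≤ 1) (hV : ∀ y, 0 ≤ V y) (hT : 0 ≤ T)
    (hfV : ∀ x y, f x y ≤ T * V y) (hδ : 0 ≤ δ) (hK0 : 0 < K)
    (hK : (∑ y, V y) * T ≤ K * δ ^ 2) : IsResolvable f K δ q := by
  have hK' : (0 : ℝ) < K := by exact_mod_cast hK0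
  obtain ⟨u, hu⟩ := exists_tuple_sum_sq_outDist_sub_le hq f (fun y => inv_nonneg.2 (hV y)) hK0
  refine ⟨u, fun D => ?_⟩
  have hvanish : ∀ y, V y = 0 → outDist (empirical u) f y - outDist q f y = 0 := fun y hy => by
    have hf0 : ∀ x, f x y = 0 := fun x => le_antisymm (by simpa [hy] using hfV x y) (hf x y)
    simp [outDist, hf0]
  have hmoment : ∑ x, q x * ∑ y, (V y)⁻¹ * f x y ^ 2 ≤ T :=
    calc ∑ x, q x * ∑ y, (V y)⁻¹ * f x y ^ 2 ≤ ∑ x, q x * T :=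
          sum_le_sum fun x _ => mul_le_mul_of_nonneg_left
            (sum_inv_mul_sq_le (hf x) (hf1 x) hV hT (hfV x)) (hq.1 x)
      _ = T := by rw [← sum_mul, hq.2, one_mul]
  have hsq : (∑ y ∈ D, (outDist (empirical u) f y - outDist q f y)) ^ 2 ≤ δ ^ 2 :=
    calc _ ≤ (∑ y, V y) * ∑ y, (V y)⁻¹ * (outDist (empirical u) f y - outDist q f y) ^ 2 :=
          sq_sum_le_sum_mul_sum_inv_mul_sq hV hvanish D
      _ ≤ (∑ y, V y) * (T / K) :=
          mul_le_mul_of_nonneg_left (hu.trans (by gcongr)) (sum_nonneg fun y _ => hV y)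
      _ ≤ δ ^ 2 := by
          rw [← mul_div_assoc, div_le_iff₀ hK']
          linarith
  have habs := (abs_le_of_sq_le_sq' hsq hδ).1
  rw [sum_sub_distrib] at habs
  linarith

-- One-sided soft covering: truncating `W` at `T * V` costs mass at most `δ` in each row, and the
-- truncated kernel is resolvable by a second-moment argument.
lemma isResolvable_of_tail_le (hq : IsPMF q) {W : X → Y → ℝ} (hW : IsChannel W)
    (hV : ∀ y, 0 ≤ V y) (hT : 0 ≤ T) (hδ : 0 ≤ δ)
    (htail : ∀ x, q x ≠ 0 → ∑ y with T * V y < W x y, W x y ≤ δ) (hK0 : 0 < K)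
    (hK : (∑ y, V y) * T ≤ K * δ ^ 2) : IsResolvable W K (2 * δ) q := by
  set f : X → Y → ℝ := fun x y => if T * V y < W x y then 0 else W x y with hf
  have hf0 : ∀ x y, 0 ≤ f x y := fun x y => by
    simp only [hf]; split_ifs; exacts [le_rfl, hW.1 x y]
  have hfW : ∀ x y, f x y ≤ W x y := fun x y => by
    simp only [hf]; split_ifs; exacts [hW.1 x y, le_rfl]
  have hfV : ∀ x y, f x y ≤ T * V y := fun x y => by
    simp only [hf]; split_ifs with h; exacts [mul_nonneg hT (hV y), not_lt.1 h]
  obtain ⟨u, hu⟩ := isResolvable_of_le_mul hq hf0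
    (fun x => (sum_le_sum fun y _ => hfW x y).trans_eq (hW.2 x)) hV hT hfV hδ hK0 hK
  refine ⟨u, fun D => ?_⟩
  have hempirical : ∑ y ∈ D, outDist (empirical u) f y ≤ ∑ y ∈ D, outDist (empirical u) W y :=
    sum_le_sum fun y _ => sum_le_sum fun x _ =>
      mul_le_mul_of_nonneg_left (hfW x y) (empirical_nonneg u x)
  linarith [almostLE_outDist hq (fun x hx => almostLE_truncate (hW.1 x) (htail x hx)) D, hu D]

-- Two messages whose restrictions to `B` are resolved by the same tuple would have nearly equal
-- output distributions, which no decoding set can tell apart.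
lemma card_heavy_messages_le {M : Type*} [Fintype M] {W : X → Y → ℝ} (hW : IsChannel W)
    {Q : M → X → ℝ} (hQ : ∀ m x, 0 ≤ Q m x) {D : M → Finset Y} {l1 l2 b : ℝ}
    (hmiss : ∀ m, ∑ y ∈ (D m)ᶜ, outDist (Q m) W y ≤ l1)
    (hwrong : ∀ m m', m ≠ m' → ∑ y ∈ D m', outDist (Q m) W y ≤ l2) {B : Finset X} (hK0 : 0 < K)
    (hres : ∀ q, IsPMF q → (∀ x, q x ≠ 0 → x ∈ B) → IsResolvable W K δ q)
    (hb : 0 < b) (hlb : l1 + l2 < b * (1 - 2 * δ)) :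
    #{m | b ≤ ∑ x ∈ B, Q m x} ≤ Fintype.card X ^ K := by
  have hcond : ∀ m, b ≤ ∑ x ∈ B, Q m x → IsPMF (condPMF (Q m) B) := fun m hm =>
    isPMF_condPMF (hQ m) (hb.trans_le hm)
  have hscale : ∀ m, b ≤ ∑ x ∈ B, Q m x → ∀ (E : Finset Y) (l : ℝ),
      ∑ y ∈ E, outDist (Q m) W y ≤ l → ∑ y ∈ E, outDist (condPMF (Q m) B) W y ≤ l / b := by
    intro m hm E l hl
    refine (sum_le_sum fun y _ => outDist_condPMF_le (hQ m) hW.1 hb hm y).trans ?_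
    rw [← sum_div]
    gcongr
  suffices #{m | b ≤ ∑ x ∈ B, Q m x} ≤ #(univ : Finset (Fin K → X)) by simpa using this
  refine card_le_card_of_forall_subsingleton
    (fun m u => AlmostLE (outDist (condPMF (Q m) B) W) (outDist (empirical u) W) δ)
    (fun m hm => ?_) fun u _ m hm m' hm' => ?_
  · obtain ⟨u, hu⟩ := hres _ (hcond m (mem_filter.1 hm).2) fun x hx => by
      by_contra hxB
      exact hx (if_neg hxB)
    exact ⟨u, mem_univ u, hu⟩
  · by_contra hne
    obtain ⟨hm, hmu⟩ := hm
    obtain ⟨hm', hmu'⟩ := hm'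
    replace hm := (mem_filter.1 hm).2
    replace hm' := (mem_filter.1 hm').2
    have hu := isPMF_outDist (isPMF_empirical hK0 u) hW
    have haccept := hscale m hm _ _ (hmiss m)
    have hreject := hscale m' hm' _ _ (hwrong m' m (Ne.symm hne))
    rw [(isPMF_outDist (hcond m hm) hW).sum_compl] at haccept
    have hle := hmu (D m)
    have hge := hmu'.symm (isPMF_outDist (hcond m' hm') hW) hu (D m)
    have hcontra : 1 - 2 * δ ≤ (l1 + l2) / b := by rw [add_div]; linarith
    rw [le_div_iff₀ hb] at hcontra
    linarith

end Resolvability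

section InformationDensity

variable {X Y : Type*} [Fintype X] {P : X → ℝ} {W : X → Y → ℝ}

/-- The information density `log (W(y|x) / (P W)(y))`, whose mean is `mutInf P W`. -/
def infoDensity (P : X → ℝ) (W : X → Y → ℝ) (x : X) (y : Y) : ℝ :=
  Real.log (W x y / outDist P W y)

lemma mul_le_outDist (hP : ∀ x, 0 ≤ P x) (hW : ∀ x y, 0 ≤ W x y) (x : X) (y : Y) :
    P x * W x y ≤ outDist P W y :=
  single_le_sum (f := fun x => P x * W x y) (fun x _ => mul_nonneg (hP x) (hW x y)) (mem_univ x)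

lemma outDist_pos (hP : ∀ x, 0 ≤ P x) (hW : ∀ x y, 0 ≤ W x y) {x : X} {y : Y} (hPx : P x ≠ 0)
    (hWxy : W x y ≠ 0) : 0 < outDist P W y :=
  (mul_pos ((hP x).lt_of_ne' hPx) ((hW x y).lt_of_ne' hWxy)).trans_le (mul_le_outDist hP hW x y)

lemma le_exp_infoDensity_mul_outDist (hP : ∀ x, 0 ≤ P x) (hW : ∀ x y, 0 ≤ W x y) {x : X}
    (hPx : P x ≠ 0) (y : Y) : W x y ≤ Real.exp (infoDensity P W x y) * outDist P W y := by
  by_cases hWxy : W x y = 0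
  · rw [hWxy]
    exact mul_nonneg (Real.exp_pos _).le (outDist_nonneg hP hW y)
  · have hout := outDist_pos hP hW hPx hWxy
    rw [infoDensity, Real.exp_log (div_pos ((hW x y).lt_of_ne' hWxy) hout),
      div_mul_cancel₀ _ hout.ne']

variable [Fintype Y]

lemma abs_infoDensity_le (hP : IsPMF P) (hW : IsChannel W) {x : X} {y : Y} (hPx : P x ≠ 0)
    (hWxy : W x y ≠ 0) : |infoDensity P W x y| ≤ -Real.log (P x) - Real.log (W x y) := by
  have hPpos := (hP.1 x).lt_of_ne' hPx
  have hWpos := (hW.1 x y).lt_of_ne' hWxy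
  have hout := outDist_pos hP.1 hW.1 hPx hWxy
  have hP1 : P x ≤ 1 := by simpa using hP.sum_le_one {x}
  have hW1 : W x y ≤ 1 := by simpa using (hW.isPMF x).sum_le_one {y}
  have hout1 : outDist P W y ≤ 1 := by simpa using (isPMF_outDist hP hW).sum_le_one {y}
  have hlog := Real.log_le_log (mul_pos hPpos hWpos) (mul_le_outDist hP.1 hW.1 x y)
  rw [Real.log_mul hPx hWxy] at hlog
  rw [infoDensity, Real.log_div hWxy hout.ne', abs_le]
  constructor <;> linarith [Real.log_nonpos hPpos.le hP1, Real.log_nonpos hWpos.le hW1,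
    Real.log_nonpos hout.le hout1]

lemma mutInf_eq_sum_infoDensity (P : X → ℝ) (W : X → Y → ℝ) :
    mutInf P W = ∑ x, P x * ∑ y, W x y * infoDensity P W x y := by
  simp only [mutInf, mul_sum]
  refine sum_congr rfl fun x _ => sum_congr rfl fun y _ => ?_
  split_ifs with h
  · rw [← mul_assoc, h, zero_mul]
  · exact mul_assoc _ _ _

lemma mutInf_nonneg (hP : IsPMF P) (hW : IsChannel W) : 0 ≤ mutInf P W := by
  rw [mutInf_eq_sum_infoDensity]
  refine sum_nonneg fun x _ => ?_
  by_cases hPx : P x = 0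
  · simp [hPx]
  refine mul_nonneg (hP.1 x) ?_
  calc 0 = ∑ y, (W x y - outDist P W y) := by
        rw [sum_sub_distrib, hW.2, (isPMF_outDist hP hW).2, sub_self]
    _ ≤ ∑ y, W x y * infoDensity P W x y := sum_le_sum fun y _ => ?_
  by_cases hWxy : W x y = 0
  · simpa [hWxy] using outDist_nonneg hP.1 hW.1 y
  · have hWpos := (hW.1 x y).lt_of_ne' hWxy
    have hlog := Real.one_sub_inv_le_log_of_pos
      (div_pos hWpos (outDist_pos hP.1 hW.1 hPx hWxy))
    calc W x y - outDist P W y = W x y * (1 - (W x y / outDist P W y)⁻¹) := by field_simp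
      _ ≤ W x y * infoDensity P W x y := mul_le_mul_of_nonneg_left hlog hWpos.le

end InformationDensity

section Types

variable {X Y : Type*} {n : ℕ}

lemma isChannel_Wn [Fintype Y] {W : X → Y → ℝ} (hW : IsChannel W) (n : ℕ) :
    IsChannel (Wn W n) :=
  ⟨fun x => (IsPMF.pi fun i => hW.isPMF (x i)).1, fun x => (IsPMF.pi fun i => hW.isPMF (x i)).2⟩

lemma inv_le_empirical (x : Fin n → X) (i : Fin n) : (n : ℝ)⁻¹ ≤ empirical x (x i) := by
  have hcard : (1 : ℝ) ≤ #{j | x j = x i} := by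
    have : 0 < #{j | x j = x i} := card_pos.2 ⟨i, by simp⟩
    exact_mod_cast this
  exact le_mul_of_one_le_right (by positivity) hcard

lemma empirical_pos (hn : 0 < n) (x : Fin n → X) (i : Fin n) : 0 < empirical x (x i) :=
  lt_of_lt_of_le (by positivity) (inv_le_empirical x i)

variable [Fintype X]

lemma Wn_le_exp_mul_prod_outDist_empirical {W : X → Y → ℝ} (hW : ∀ x y, 0 ≤ W x y) (hn : 0 < n)
    (x : Fin n → X) (y : Fin n → Y) :
    Wn W n x y ≤ Real.exp (∑ i, infoDensity (empirical x) W (x i) (y i)) *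
      ∏ i, outDist (empirical x) W (y i) := by
  rw [Real.exp_sum, ← prod_mul_distrib]
  exact prod_le_prod (fun i _ => hW _ _) fun i _ =>
    le_exp_infoDensity_mul_outDist (empirical_nonneg x) hW (empirical_pos hn x i).ne' _

/-- The types of sequences of length `n` (all empirical distributions). -/
def types (X : Type*) [Fintype X] (n : ℕ) : Finset (X → ℝ) :=
  univ.image (empirical : (Fin n → X) → X → ℝ)

lemma card_types_le (X : Type*) [Fintype X] (n : ℕ) :
    #(types X n) ≤ (n + 1) ^ Fintype.card X := by
  have hsub : types X n ⊆
      univ.image fun (τ : X → Fin (n + 1)) (a : X) => (n : ℝ)⁻¹ * ((τ a : ℕ) : ℝ) := by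
    intro P hP
    obtain ⟨x, -, rfl⟩ := mem_image.1 hP
    refine mem_image.2 ⟨fun a => ⟨#{i | x i = a}, ?_⟩, mem_univ _, rfl⟩
    exact Nat.lt_succ_of_le ((card_filter_le _ _).trans_eq (by simp))
  refine (card_le_card hsub).trans (card_image_le.trans_eq ?_)
  simp

/-- The sum over all types `P` of the memoryless output distributions `(P W)ⁿ`: a measure that
dominates each of them and has only polynomial mass in `n`. -/
def typeMixture (W : X → Y → ℝ) (n : ℕ) (y : Fin n → Y) : ℝ :=
  ∑ P ∈ types X n, ∏ i, outDist P W (y i)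

lemma prod_outDist_nonneg_of_mem_types {W : X → Y → ℝ} (hW : ∀ x y, 0 ≤ W x y) {P : X → ℝ}
    (hP : P ∈ types X n) (y : Fin n → Y) : 0 ≤ ∏ i, outDist P W (y i) := by
  obtain ⟨x, -, rfl⟩ := mem_image.1 hP
  exact prod_nonneg fun i _ => outDist_nonneg (empirical_nonneg x) hW _

lemma prod_outDist_empirical_le_typeMixture {W : X → Y → ℝ} (hW : ∀ x y, 0 ≤ W x y)
    (x : Fin n → X) (y : Fin n → Y) :
    ∏ i, outDist (empirical x) W (y i) ≤ typeMixture W n y :=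
  single_le_sum (f := fun P => ∏ i, outDist P W (y i))
    (fun _ hP => prod_outDist_nonneg_of_mem_types hW hP y) (mem_image_of_mem _ (mem_univ x))

lemma sum_typeMixture_le [Fintype Y] {W : X → Y → ℝ} (hW : IsChannel W) (hn : 0 < n) :
    ∑ y, typeMixture W n y ≤ ((n : ℝ) + 1) ^ Fintype.card X := by
  have hone : ∀ P ∈ types X n, ∑ y : Fin n → Y, ∏ i, outDist P W (y i) = 1 := fun P hP => by
    obtain ⟨x, -, rfl⟩ := mem_image.1 hP
    exact (IsPMF.pi fun _ => isPMF_outDist (isPMF_empirical hn x) hW).2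
  calc ∑ y, typeMixture W n y = (#(types X n) : ℝ) := by
        simp only [typeMixture]
        rw [sum_comm, sum_congr rfl hone, sum_const, nsmul_one]
    _ ≤ ((n : ℝ) + 1) ^ Fintype.card X := by exact_mod_cast card_types_le X n

variable [Fintype Y] {W : X → Y → ℝ}

lemma sum_sq_infoDensity_empirical_le (hW : IsChannel W) {c : ℝ}
    (hc : ∀ x y, -Real.log (W x y) ≤ c) (hn : 0 < n) (x : Fin n → X) (i : Fin n) :
    ∑ y, W (x i) y * infoDensity (empirical x) W (x i) y ^ 2 ≤ (Real.log n + c) ^ 2 := by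
  have hlog : -Real.log (empirical x (x i)) ≤ Real.log n := by
    have := Real.log_le_log (by positivity) (inv_le_empirical x i)
    rw [Real.log_inv] at this
    linarith
  calc ∑ y, W (x i) y * infoDensity (empirical x) W (x i) y ^ 2
      ≤ ∑ y, W (x i) y * (Real.log n + c) ^ 2 := sum_le_sum fun y _ => ?_
    _ = (Real.log n + c) ^ 2 := by rw [← sum_mul, hW.2, one_mul]
  by_cases hWxy : W (x i) y = 0
  · simp [hWxy]
  · have habs := abs_infoDensity_le (isPMF_empirical hn x) hW (empirical_pos hn x i).ne' hWxy
    exact mul_le_mul_of_nonneg_left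
      (sq_le_sq' (by linarith [(abs_le.1 habs).1, hc (x i) y])
        (by linarith [(abs_le.1 habs).2, hc (x i) y])) (hW.1 _ _)

-- Chebyshev's inequality: the information density of `x` relative to its own type has mean
-- `n * mutInf (empirical x) W`, and its summands are at most `log n + c` in absolute value.
lemma sum_filter_exp_mul_prod_outDist_lt_Wn_le (hW : IsChannel W) {c : ℝ}
    (hc : ∀ x y, -Real.log (W x y) ≤ c) (hn : 0 < n) (x : Fin n → X) {γ : ℝ} (hγ : 0 < γ) :
    ∑ y with Real.exp (n * (mutInf (empirical x) W + γ)) *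
        ∏ i, outDist (empirical x) W (y i) < Wn W n x y, Wn W n x y ≤
      (Real.log n + c) ^ 2 / (n * γ ^ 2) := by
  have hn' : (0 : ℝ) < n := by exact_mod_cast hn
  have hmean : ∑ i, ∑ y, W (x i) y * infoDensity (empirical x) W (x i) y =
      n * mutInf (empirical x) W := by
    rw [mutInf_eq_sum_infoDensity, sum_empirical_mul, mul_inv_cancel_left₀ hn'.ne']
  calc _ ≤ ∑ y : Fin n → Y with n * γ < ∑ i, (infoDensity (empirical x) W (x i) (y i) -
            ∑ z, W (x i) z * infoDensity (empirical x) W (x i) z), Wn W n x y := by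
        refine sum_le_sum_of_subset_of_nonneg (fun y hy => ?_)
          fun y _ _ => (isChannel_Wn hW n).1 x y
        simp only [mem_filter, mem_univ, true_and, sum_sub_distrib, hmean] at hy ⊢
        by_contra! hle
        refine hy.not_ge ((Wn_le_exp_mul_prod_outDist_empirical hW.1 hn x y).trans ?_)
        gcongr
        · exact prod_nonneg fun i _ => outDist_nonneg (empirical_nonneg x) hW.1 _
        · linarith
    _ ≤ (∑ i, ∑ y, W (x i) y * infoDensity (empirical x) W (x i) y ^ 2) / (n * γ) ^ 2 :=
        sum_pi_filter_lt_sum_sub_mean_le (fun i => hW.isPMF (x i)) _ (by positivity)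
    _ ≤ (∑ _i : Fin n, (Real.log n + c) ^ 2) / (n * γ) ^ 2 := by
        gcongr with i
        exact sum_sq_infoDensity_empirical_le hW hc hn x i
    _ = (Real.log n + c) ^ 2 / (n * γ ^ 2) := by
        rw [sum_const, card_univ, Fintype.card_fin, nsmul_eq_mul]
        field_simp

lemma isResolvable_Wn (hW : IsChannel W) {c : ℝ} (hc : ∀ x y, -Real.log (W x y) ≤ c)
    (hn : 0 < n) {q : (Fin n → X) → ℝ} (hq : IsPMF q) {γ r : ℝ} (hγ : 0 < γ)
    (hqr : ∀ x, q x ≠ 0 → mutInf (empirical x) W + γ ≤ r) {δ : ℝ}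
    (hδ : (Real.log n + c) ^ 2 / (n * γ ^ 2) ≤ δ) {K : ℕ} (hK0 : 0 < K)
    (hK : ((n : ℝ) + 1) ^ Fintype.card X * Real.exp (n * r) ≤ K * δ ^ 2) :
    IsResolvable (Wn W n) K (2 * δ) q := by
  have hδ0 : 0 ≤ δ := le_trans (by positivity) hδ
  have hV : ∀ y, 0 ≤ typeMixture W n y := fun y =>
    sum_nonneg fun P hP => prod_outDist_nonneg_of_mem_types hW.1 hP y
  refine isResolvable_of_tail_le hq (isChannel_Wn hW n) hV (Real.exp_pos (n * r)).le hδ0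
    (fun x hx => ?_) hK0 (le_trans ?_ hK)
  · refine le_trans ?_
      ((sum_filter_exp_mul_prod_outDist_lt_Wn_le hW hc hn x hγ).trans hδ)
    refine sum_le_sum_of_subset_of_nonneg (monotone_filter_right _ fun y _ hy => ?_)
      fun y _ _ => (isChannel_Wn hW n).1 x y
    refine lt_of_le_of_lt ?_ hy
    gcongr
    · exact prod_nonneg fun i _ => outDist_nonneg (empirical_nonneg x) hW.1 _
    · exact hqr x hx
    · exact prod_outDist_empirical_le_typeMixture hW.1 x y
  · gcongr
    exact sum_typeMixture_le hW hn

end Types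

section Asymptotics

lemma eventually_sq_log_add_div_le (c : ℝ) {γ δ : ℝ} (hγ : 0 < γ) (hδ : 0 < δ) :
    ∀ᶠ n : ℕ in Filter.atTop, (Real.log n + c) ^ 2 / (n * γ ^ 2) ≤ δ := by
  have hscale : Filter.Tendsto (fun n : ℕ => Real.exp c * n) Filter.atTop Filter.atTop :=
    tendsto_natCast_atTop_atTop.const_mul_atTop (Real.exp_pos c)
  have hlog := (Real.isLittleO_pow_log_id_atTop (n := 2)).comp_tendsto hscale
  filter_upwards [hlog.def (c := δ * γ ^ 2 / Real.exp c) (by positivity),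
    Filter.eventually_gt_atTop 0] with n hle hn
  have hn' : (0 : ℝ) < n := by exact_mod_cast hn
  simp only [Function.comp_apply, id_eq] at hle
  rw [Real.log_mul (Real.exp_ne_zero c) hn'.ne', Real.log_exp, add_comm,
    Real.norm_of_nonneg (by positivity), Real.norm_of_nonneg (by positivity)] at hle
  rw [div_le_iff₀ (by positivity)]
  calc _ ≤ _ := hle
    _ = δ * (n * γ ^ 2) := by field_simp

lemma eventually_succ_pow_le_mul_exp (d : ℕ) {γ δ : ℝ} (hγ : 0 < γ) (hδ : 0 < δ) :
    ∀ᶠ n : ℕ in Filter.atTop, ((n : ℝ) + 1) ^ d ≤ δ * Real.exp (n * γ) := by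
  have hsucc : Filter.Tendsto (fun n : ℕ => (n : ℝ) + 1) Filter.atTop Filter.atTop :=
    Filter.tendsto_atTop_add_const_right _ _ tendsto_natCast_atTop_atTop
  have hpow := (isLittleO_pow_exp_pos_mul_atTop d hγ).comp_tendsto hsucc
  filter_upwards [hpow.def (c := δ * Real.exp (-γ)) (by positivity)] with n hle
  simp only [Function.comp_apply] at hle
  rw [Real.norm_of_nonneg (by positivity), Real.norm_of_nonneg (by positivity), mul_assoc,
    ← Real.exp_add] at hle
  convert hle using 3
  ring

lemma eventually_mul_exp_add_le (a d : ℝ) {R γ : ℝ} (hR : 0 < R) (hγ : 0 < γ) :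
    ∀ᶠ n : ℕ in Filter.atTop, n * a * (Real.exp (n * (R - γ)) + 1) + d ≤ Real.exp (n * R) := by
  have hlin : ∀ {β : ℝ}, 0 < β → ∀ᶠ n : ℕ in Filter.atTop, n * a ≤ Real.exp (n * β) / 4 := by
    intro β hβ
    filter_upwards [eventually_succ_pow_le_mul_exp 1 hβ (δ := 1 / (4 * (|a| + 1)))
      (by positivity)] with n hn
    rw [pow_one, one_div_mul_eq_div, le_div_iff₀ (by positivity)] at hn
    have := mul_le_mul_of_nonneg_left (le_abs_self a) n.cast_nonneg
    linarith [abs_nonneg a]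
  have hconst : ∀ᶠ n : ℕ in Filter.atTop, 2 * d ≤ Real.exp (n * R) :=
    (Real.tendsto_exp_atTop.comp
      (tendsto_natCast_atTop_atTop.atTop_mul_const hR)).eventually_ge_atTop (2 * d)
  filter_upwards [hlin hγ, hlin hR, hconst] with n hnγ hnR hnd
  have hmain : n * a * Real.exp (n * (R - γ)) ≤ Real.exp (n * R) / 4 :=
    calc n * a * Real.exp (n * (R - γ)) ≤ Real.exp (n * γ) / 4 * Real.exp (n * (R - γ)) := by
          gcongr
      _ = Real.exp (n * R) / 4 := by rw [div_mul_eq_mul_div, ← Real.exp_add]; ring_nf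
  linarith

lemma eventually_pow_pow_ceil_exp_le (a : ℕ) {R γ δ : ℝ} (hR : 0 < R) (hγ : 0 < γ)
    (hδ : 0 < δ) :
    ∀ᶠ n : ℕ in Filter.atTop, ((a : ℝ) ^ n) ^ ⌈Real.exp (n * (R - γ))⌉₊ ≤
      δ * Real.exp (Real.exp (n * R)) := by
  filter_upwards [eventually_mul_exp_add_le a (-Real.log δ) hR hγ] with n hn
  have hceil := (Nat.ceil_lt_add_one (Real.exp_pos (n * (R - γ))).le).le
  calc ((a : ℝ) ^ n) ^ ⌈Real.exp (n * (R - γ))⌉₊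
      ≤ (Real.exp a ^ n) ^ ⌈Real.exp (n * (R - γ))⌉₊ := by
        gcongr
        linarith [Real.add_one_le_exp (a : ℝ)]
    _ = Real.exp (n * a * ⌈Real.exp (n * (R - γ))⌉₊) := by
        rw [← Real.exp_nat_mul, ← Real.exp_nat_mul, mul_comm]
    _ ≤ Real.exp (Real.log δ + Real.exp (n * R)) := by
        have := mul_le_mul_of_nonneg_left hceil (by positivity : 0 ≤ (n : ℝ) * a)
        gcongr
        linarith
    _ = δ * Real.exp (Real.exp (n * R)) := by rw [Real.exp_add, Real.exp_log hδ]

end Asymptotics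

section StrongConverse

variable {X Y : Type*} [Fintype X] [Fintype Y] {W : X → Y → ℝ}

/-- The sequences whose type has mutual information at most `r` over `W`. -/
def lowMutInfSeqs (W : X → Y → ℝ) (n : ℕ) (r : ℝ) : Finset (Fin n → X) :=
  {x | mutInf (empirical x) W ≤ r}

lemma mem_lowMutInfSeqs {n : ℕ} {r : ℝ} {x : Fin n → X} :
    x ∈ lowMutInfSeqs W n r ↔ mutInf (empirical x) W ≤ r :=
  mem_filter_univ x

lemma lowMutInfSeqs_eq_empty (hW : IsChannel W) {n : ℕ} (hn : 0 < n) {r : ℝ} (hr : r < 0) :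
    lowMutInfSeqs W n r = ∅ :=
  filter_eq_empty_iff.2 fun x _ =>
    (hr.trans_le (mutInf_nonneg (isPMF_empirical hn x) hW)).not_ge

lemma eventually_isResolvable_Wn (hW : IsChannel W) (R : ℝ) {ε δ : ℝ} (hε : 0 < ε) (hδ : 0 < δ) :
    ∀ᶠ n : ℕ in Filter.atTop, ∀ q : (Fin n → X) → ℝ, IsPMF q →
      (∀ x, q x ≠ 0 → x ∈ lowMutInfSeqs W n (R - ε)) →
      IsResolvable (Wn W n) ⌈Real.exp (n * (R - ε / 3))⌉₊ δ q := by
  obtain ⟨c, hc⟩ := Finite.exists_le fun p : X × Y => -Real.log (W p.1 p.2)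
  have hγ : 0 < ε / 3 := by positivity
  filter_upwards [Filter.eventually_gt_atTop 0, eventually_sq_log_add_div_le c hγ (half_pos hδ),
    eventually_succ_pow_le_mul_exp (Fintype.card X) hγ (pow_pos (half_pos hδ) 2)]
    with n hn hvar hpoly q hq hqR
  rw [← mul_div_cancel₀ δ two_ne_zero]
  refine isResolvable_Wn hW (fun x y => hc (x, y)) hn hq hγ (r := R - 2 * (ε / 3))
    (fun x hx => by linarith [mem_lowMutInfSeqs.1 (hqR x hx)]) hvar
    (Nat.ceil_pos.2 (Real.exp_pos _)) ?_
  calc ((n : ℝ) + 1) ^ Fintype.card X * Real.exp (n * (R - 2 * (ε / 3)))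
      ≤ (δ / 2) ^ 2 * Real.exp (n * (ε / 3)) * Real.exp (n * (R - 2 * (ε / 3))) := by gcongr
    _ = Real.exp (n * (R - ε / 3)) * (δ / 2) ^ 2 := by
        rw [mul_assoc, ← Real.exp_add, mul_comm]; ring_nf
    _ ≤ ⌈Real.exp (n * (R - ε / 3))⌉₊ * (δ / 2) ^ 2 := by
        gcongr
        exact Nat.le_ceil _

lemma IsIDCode.add_errors_nonneg {M : Type*} [Nontrivial M] {n : ℕ} {Q : M → (Fin n → X) → ℝ}
    {D : M → Finset (Fin n → Y)} {l1 l2 : ℝ} (hW : IsChannel W) (h : IsIDCode n W Q D l1 l2) :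
    0 ≤ l1 + l2 := by
  obtain ⟨m, m', hne⟩ := exists_pair_ne M
  have hprob : ∀ D : Finset (Fin n → Y), 0 ≤ ∑ x, Q m x * ∑ y ∈ D, Wn W n x y := fun D =>
    sum_nonneg fun x _ => mul_nonneg ((h.1 m).1 x)
      (sum_nonneg fun y _ => (isChannel_Wn hW n).1 x y)
  exact add_nonneg ((hprob _).trans (h.2.1 m)) ((hprob _).trans (h.2.2 m m' hne))

lemma IsIDCode.card_heavy_le {M : Type*} [Fintype M] {n : ℕ}
    {Q : M → (Fin n → X) → ℝ} {D : M → Finset (Fin n → Y)} {l1 l2 : ℝ}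
    (h : IsIDCode n W Q D l1 l2) (hW : IsChannel W) {B : Finset (Fin n → X)} {K : ℕ}
    (hK0 : 0 < K) {b δ : ℝ}
    (hres : ∀ q, IsPMF q → (∀ x, q x ≠ 0 → x ∈ B) → IsResolvable (Wn W n) K δ q)
    (hb : 0 < b) (hlb : l1 + l2 < b * (1 - 2 * δ)) :
    #{m | b ≤ ∑ x ∈ B, Q m x} ≤ (Fintype.card X ^ n) ^ K := by
  have hcard := card_heavy_messages_le (isChannel_Wn hW n) (fun m => (h.1 m).1)
    (fun m => by rw [sum_outDist]; convert h.2.1 m)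
    (fun m m' hne => by rw [sum_outDist]; exact h.2.2 m m' hne) hK0 hres hb hlb
  simpa using hcard

lemma eventually_card_heavy_messages_div_le (hW : IsChannel W) {R l1 l2 b ε δ : ℝ} (hR : 0 < R)
    (hb : 0 < b) (hlb : l1 + l2 < b) (hε : 0 < ε) (hδ : 0 < δ) :
    ∀ᶠ n : ℕ in Filter.atTop, ∀ k : ℕ, Real.exp (Real.exp (n * R)) ≤ k →
      ∀ (Q : Fin k → (Fin n → X) → ℝ) (D : Fin k → Finset (Fin n → Y)),
        IsIDCode n W Q D l1 l2 →
        #{m | b ≤ ∑ x ∈ lowMutInfSeqs W n (R - ε), Q m x} / (k : ℝ) ≤ δ := by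
  set η := (b - (l1 + l2)) / (4 * b) with hη
  have hη0 : 0 < η := div_pos (by linarith) (by linarith)
  have hη_gap : l1 + l2 < b * (1 - 2 * η) := by
    have : b * (1 - 2 * η) = b - (b - (l1 + l2)) / 2 := by rw [hη]; field_simp; ring
    linarith
  filter_upwards [eventually_isResolvable_Wn hW R hε hη0,
    eventually_pow_pow_ceil_exp_le (Fintype.card X) hR (by positivity : 0 < ε / 3) hδ]
    with n hres hcount k hk Q D hcode
  have hcard := hcode.card_heavy_le hW (Nat.ceil_pos.2 (Real.exp_pos _)) hres hb hη_gap
  rw [div_le_iff₀ ((Real.exp_pos _).trans_le hk)]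
  calc _ ≤ ((Fintype.card X : ℝ) ^ n) ^ ⌈Real.exp (n * (R - ε / 3))⌉₊ := by exact_mod_cast hcard
    _ ≤ δ * Real.exp (Real.exp (n * R)) := hcount
    _ ≤ δ * k := by gcongr

lemma nontrivial_fin_of_exp_exp_le {k : ℕ} {r : ℝ} (hk : Real.exp (Real.exp r) ≤ k) :
    Nontrivial (Fin k) := by
  have hk1 : (1 : ℝ) < k := (Real.one_lt_exp_iff.2 (Real.exp_pos r)).trans_le hk
  exact Fin.nontrivial_iff_two_le.2 (by exact_mod_cast hk1)

lemma eventually_sum_uniformMix_lowMutInfSeqs_le (hW : IsChannel W) (R l1 l2 : ℝ) {ε δ : ℝ}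
    (hε : 0 < ε) (hδ : 0 < δ) :
    ∀ᶠ n : ℕ in Filter.atTop, ∀ k : ℕ, Real.exp (Real.exp (n * R)) ≤ k →
      ∀ (Q : Fin k → (Fin n → X) → ℝ) (D : Fin k → Finset (Fin n → Y)),
        IsIDCode n W Q D l1 l2 →
        ∑ x ∈ lowMutInfSeqs W n (R - ε), uniformMix Q x ≤ l1 + l2 + δ := by
  rcases le_or_gt R 0 with hR | hR
  · filter_upwards [Filter.eventually_gt_atTop 0] with n hn k hk Q D hcode
    have := nontrivial_fin_of_exp_exp_le hk
    rw [lowMutInfSeqs_eq_empty hW hn (by linarith), sum_empty]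
    linarith [hcode.add_errors_nonneg hW]
  · filter_upwards [eventually_card_heavy_messages_div_le hW hR (l1 := l1) (l2 := l2)
      (b := |l1 + l2| + δ / 2) (by positivity) (by linarith [le_abs_self (l1 + l2)]) hε
      (half_pos hδ)]
      with n hheavy k hk Q D hcode
    have := nontrivial_fin_of_exp_exp_le hk
    have hmix := sum_uniformMix_le hcode.1 (lowMutInfSeqs W n (R - ε))
      (b := |l1 + l2| + δ / 2) (by positivity)
    rw [Fintype.card_fin] at hmix
    linarith [hheavy k hk Q D hcode, abs_of_nonneg (hcode.add_errors_nonneg hW)]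

end StrongConverse

section BroadcastChannel

variable {X Y1 Y2 Y3 : Type*} [Fintype Y1] [Fintype Y2] [Fintype Y3] {W : X → Y1 → Y2 → Y3 → ℝ}

lemma IsBC3.isChannel_marg1 (hW : IsBC3 W) : IsChannel (marg1 W) :=
  ⟨fun x y1 => sum_nonneg fun y2 _ => sum_nonneg fun y3 _ => hW.1 x y1 y2 y3, hW.2⟩

lemma IsBC3.isChannel_marg2 (hW : IsBC3 W) : IsChannel (marg2 W) :=
  ⟨fun x y2 => sum_nonneg fun y1 _ => sum_nonneg fun y3 _ => hW.1 x y1 y2 y3,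
    fun x => sum_comm.trans (hW.2 x)⟩

lemma IsBC3.isChannel_marg3 (hW : IsBC3 W) : IsChannel (marg3 W) :=
  ⟨fun x y3 => sum_nonneg fun y1 _ => sum_nonneg fun y2 _ => hW.1 x y1 y2 y3, fun x => by
    rw [← hW.2 x]
    unfold marg3
    rw [sum_comm]
    exact sum_congr rfl fun y1 _ => sum_comm⟩

variable [Fintype X] {n k1 k2 k3 : ℕ} {Q : Fin k1 → Fin k2 → Fin k3 → (Fin n → X) → ℝ}
  {D1 : Fin k1 → Finset (Fin n → Y1)} {D2 : Fin k2 → Finset (Fin n → Y2)}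
  {D3 : Fin k3 → Finset (Fin n → Y3)} {l11 l21 l12 l22 l13 l23 : ℝ}

lemma IsBC3IDCode.isIDCode_marg1 [Nonempty (Fin k2)] [Nonempty (Fin k3)]
    (h : IsBC3IDCode n k1 k2 k3 W Q D1 D2 D3 l11 l21 l12 l22 l13 l23) :
    IsIDCode n (marg1 W) (fun m1 => uniformMix fun m2 => uniformMix fun m3 => Q m1 m2 m3)
      D1 l11 l21 :=
  ⟨fun m1 => isPMF_uniformMix fun m2 => isPMF_uniformMix fun m3 => h.1 m1 m2 m3, by
    simpa only [uniformMix_uniformMix_fin] using h.2.1⟩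

lemma IsBC3IDCode.isIDCode_marg2 [Nonempty (Fin k1)] [Nonempty (Fin k3)]
    (h : IsBC3IDCode n k1 k2 k3 W Q D1 D2 D3 l11 l21 l12 l22 l13 l23) :
    IsIDCode n (marg2 W) (fun m2 => uniformMix fun m1 => uniformMix fun m3 => Q m1 m2 m3)
      D2 l12 l22 :=
  ⟨fun m2 => isPMF_uniformMix fun m1 => isPMF_uniformMix fun m3 => h.1 m1 m2 m3, by
    simpa only [uniformMix_uniformMix_fin] using h.2.2.1⟩

lemma IsBC3IDCode.isIDCode_marg3 [Nonempty (Fin k1)] [Nonempty (Fin k2)]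
    (h : IsBC3IDCode n k1 k2 k3 W Q D1 D2 D3 l11 l21 l12 l22 l13 l23) :
    IsIDCode n (marg3 W) (fun m3 => uniformMix fun m1 => uniformMix fun m2 => Q m1 m2 m3)
      D3 l13 l23 :=
  ⟨fun m3 => isPMF_uniformMix fun m1 => isPMF_uniformMix fun m2 => h.1 m1 m2 m3, by
    simpa only [uniformMix_uniformMix_fin] using h.2.2.2⟩

end BroadcastChannel

theorem bc3_id_strong_converse_general
    {X Y1 Y2 Y3 : Type*} [Fintype X] [Fintype Y1] [Fintype Y2] [Fintype Y3]
    {W : X → Y1 → Y2 → Y3 → ℝ} (hW : IsBC3 W) (R1 R2 R3 : ℝ) {l11 l21 l12 l22 l13 l23 : ℝ}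
    (hsum : l11 + l21 + (l12 + l22) + (l13 + l23) < 1) {ε : ℝ} (hε : 0 < ε) :
    ∀ᶠ n : ℕ in Filter.atTop, ∀ k1 k2 k3 : ℕ, Real.exp (Real.exp (n * R1)) ≤ k1 →
      Real.exp (Real.exp (n * R2)) ≤ k2 → Real.exp (Real.exp (n * R3)) ≤ k3 →
      ∀ (Q : Fin k1 → Fin k2 → Fin k3 → (Fin n → X) → ℝ) (D1 : Fin k1 → Finset (Fin n → Y1))
        (D2 : Fin k2 → Finset (Fin n → Y2)) (D3 : Fin k3 → Finset (Fin n → Y3)),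
        IsBC3IDCode n k1 k2 k3 W Q D1 D2 D3 l11 l21 l12 l22 l13 l23 →
        ∃ P : X → ℝ, IsPMF P ∧ R1 < mutInf P (marg1 W) + ε ∧ R2 < mutInf P (marg2 W) + ε ∧
          R3 < mutInf P (marg3 W) + ε := by
  set δ := (1 - (l11 + l21 + (l12 + l22) + (l13 + l23))) / 6 with hδ
  have hδ0 : 0 < δ := by linarith
  filter_upwards [Filter.eventually_gt_atTop 0,
    eventually_sum_uniformMix_lowMutInfSeqs_le hW.isChannel_marg1 R1 l11 l21 hε hδ0,
    eventually_sum_uniformMix_lowMutInfSeqs_le hW.isChannel_marg2 R2 l12 l22 hε hδ0,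
    eventually_sum_uniformMix_lowMutInfSeqs_le hW.isChannel_marg3 R3 l13 l23 hε hδ0]
    with n hn hlow1 hlow2 hlow3 k1 k2 k3 hk1 hk2 hk3 Q D1 D2 D3 hcode
  have := nontrivial_fin_of_exp_exp_le hk1
  have := nontrivial_fin_of_exp_exp_le hk2
  have := nontrivial_fin_of_exp_exp_le hk3
  set q := uniformMix fun m1 => uniformMix fun m2 => uniformMix fun m3 => Q m1 m2 m3
  have hqPMF : IsPMF q := isPMF_uniformMix hcode.isIDCode_marg1.1
  have hmass1 := hlow1 k1 hk1 _ D1 hcode.isIDCode_marg1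
  have hmass2 := hlow2 k2 hk2 _ D2 hcode.isIDCode_marg2
  have hmass3 := hlow3 k3 hk3 _ D3 hcode.isIDCode_marg3
  have hq2 : uniformMix (fun m2 => uniformMix fun m1 => uniformMix fun m3 => Q m1 m2 m3) = q :=
    uniformMix_comm _
  have hq3 : uniformMix (fun m3 => uniformMix fun m1 => uniformMix fun m2 => Q m1 m2 m3) = q :=
    (uniformMix_comm _).trans (congrArg uniformMix (funext fun m1 => uniformMix_comm _))
  rw [hq2] at hmass2
  rw [hq3] at hmass3
  obtain ⟨x, hx⟩ := hqPMF.exists_forall_notMem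
    ![lowMutInfSeqs (marg1 W) n (R1 - ε), lowMutInfSeqs (marg2 W) n (R2 - ε),
      lowMutInfSeqs (marg3 W) n (R3 - ε)] (by
    simp only [Fin.sum_univ_three, Matrix.cons_val]
    linarith)
  simp only [Fin.forall_fin_succ, Matrix.cons_val] at hx
  exact ⟨empirical x, isPMF_empirical hn x, by
    simpa [mem_lowMutInfSeqs, sub_lt_iff_lt_add] using hx⟩

/-- **Claim 4.** Strong converse for the three-receiver BC. -/
theorem bc3_id_strong_converse
    {X Y1 Y2 Y3 : Type} [Fintype X] [Fintype Y1] [Fintype Y2] [Fintype Y3]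
    [Nonempty X] [Nonempty Y1] [Nonempty Y2] [Nonempty Y3]
    (W : X → Y1 → Y2 → Y3 → ℝ) (hW : IsBC3 W)
    (R1 R2 R3 : ℝ) (hR1 : 0 ≤ R1) (hR2 : 0 ≤ R2) (hR3 : 0 ≤ R3)
    (l11 l21 l12 l22 l13 l23 : ℝ)
    (h11 : 0 < l11) (h21 : 0 < l21) (h12 : 0 < l12) (h22 : 0 < l22)
    (h13 : 0 < l13) (h23 : 0 < l23)
    (hsum : l11 + l21 + (l12 + l22) + (l13 + l23) < 1)
    (ε : ℝ) (hε : 0 < ε) :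
    ∃ η₀ : ℕ, ∀ n : ℕ, η₀ ≤ n →
      ∀ k1 k2 k3 : ℕ,
        k1 = Nat.ceil (Real.exp (Real.exp (n * R1))) →
        k2 = Nat.ceil (Real.exp (Real.exp (n * R2))) →
        k3 = Nat.ceil (Real.exp (Real.exp (n * R3))) →
        ∀ (Q : Fin k1 → Fin k2 → Fin k3 → (Fin n → X) → ℝ)
          (D1 : Fin k1 → Finset (Fin n → Y1))
          (D2 : Fin k2 → Finset (Fin n → Y2))
          (D3 : Fin k3 → Finset (Fin n → Y3)),
          IsBC3IDCode n k1 k2 k3 W Q D1 D2 D3 l11 l21 l12 l22 l13 l23 →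
          ∃ P : X → ℝ, IsPMF P ∧
            R1 < mutInf P (marg1 W) + ε ∧
            R2 < mutInf P (marg2 W) + ε ∧
            R3 < mutInf P (marg3 W) + ε := by
  obtain ⟨η₀, h⟩ := Filter.eventually_atTop.1 (bc3_id_strong_converse_general hW R1 R2 R3 hsum hε)
  refine ⟨η₀, fun n hn k1 k2 k3 hk1 hk2 hk3 => h n hn k1 k2 k3 ?_ ?_ ?_⟩ <;>
    subst_vars <;> exact Nat.le_ceil _
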